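/- Purity encoding of the α-Stabilizer Rényi Entropy (main encoding result): for every natural number n, every integer α ≥ 1, and every unit vector ψ : (Fin n → Fin 2) → ℂ, the purity of the channel output satisfies Re( trace(ρ_α * ρ_α) ) = d⁻¹ · A_α(ψ), where d = 2^n and ρ_α is the matrix indexed by (Fin α → Fin n → Fin 2) with entries ρ_α f g = d⁻² · Σ over all s : Fin n → Fin 4 of ∏_{m : Fin α} (P_s.mulVec ψ) (f m) · conj((P_s.mulVec ψ) (g m)). -/

import Mathlib

open Complex Matrix BigOperators

/-- The single-qubit Pauli matrices `Q₀ = 1`, `Q₁ = X`, `Q₂ = Y`, `Q₃ = Z`. -/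
noncomputable def Q : Fin 4 → Matrix (Fin 2) (Fin 2) ℂ :=
  ![1, !![0, 1; 1, 0], !![0, -Complex.I; Complex.I, 0], !![1, 0; 0, -1]]

/-- The `n`-qubit Pauli string `P_s`, the Kronecker product of the `Q (s k)`. -/
noncomputable def P {n : ℕ} (s : Fin n → Fin 4) :
    Matrix (Fin n → Fin 2) (Fin n → Fin 2) ℂ :=
  Matrix.of fun i j => ∏ k, Q (s k) (i k) (j k)


/-- `A_α(ψ) = d⁻¹ ∑_s ⟨ψ, P_s ψ⟩^(2α)` with `d = 2^n`. -/
noncomputable def A (n α : ℕ) (ψ : (Fin n → Fin 2) → ℂ) : ℝ :=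
  (2 ^ n : ℝ)⁻¹ * ∑ s : Fin n → Fin 4, (star ψ ⬝ᵥ (P s).mulVec ψ).re ^ (2 * α)


/-- The channel output `E_P^α(|ψ⟩⟨ψ|^⊗α)`: each Pauli string applied with probability `d⁻²`
simultaneously to all `α` copies of `ψ`. -/
noncomputable def rho (n α : ℕ) (ψ : (Fin n → Fin 2) → ℂ) :
    Matrix (Fin α → Fin n → Fin 2) (Fin α → Fin n → Fin 2) ℂ :=
  Matrix.of fun f g => ((2 ^ n : ℂ) ^ 2)⁻¹ *
    ∑ s : Fin n → Fin 4, ∏ m, ((P s).mulVec ψ (f m) * (starRingEnd ℂ) ((P s).mulVec ψ (g m)))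

/-!
`ρ` is the average of the operators `(|φ_s⟩⟨φ_s|)^⊗α`, where `φ_s = P_s ψ`, so its purity is the
average of `|⟨φ_s, φ_t⟩|^(2α)` over all pairs `s, t`. A product of two Pauli strings is, up to a
phase, the Hermitian Pauli string labelled by the bitwise XOR `s ⊕ t`. Hence
`|⟨φ_s, φ_t⟩|² = ⟨ψ, P_{s⊕t} ψ⟩²`, and for each fixed `s` the sum over `t` is a sum over all
strings.
-/

/-- The Kronecker product of a family of matrices, indexed by tuples of indices; it encodes
tensor products of operators such as `P_s = ⨂ₖ Q (s k)` and `(|φ⟩⟨φ|)^⊗α`. -/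
def piKronecker {ι R : Type*} {l m : ι → Type*} [Fintype ι] [CommMonoid R]
    (M : ∀ k, Matrix (l k) (m k) R) : Matrix (∀ k, l k) (∀ k, m k) R :=
  Matrix.of fun i j => ∏ k, M k (i k) (j k)

section PiKronecker

variable {ι R : Type*} {l m p : ι → Type*} [Fintype ι]

lemma conjTranspose_piKronecker [CommMonoid R] [StarMul R] (M : ∀ k, Matrix (l k) (m k) R) :
    (piKronecker M)ᴴ = piKronecker fun k => (M k)ᴴ := by
  ext i j
  simp only [piKronecker, conjTranspose_apply, of_apply, star_prod]

lemma piKronecker_smul [CommMonoid R] (c : ι → R) (M : ∀ k, Matrix (l k) (m k) R) :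
    piKronecker (fun k => c k • M k) = (∏ k, c k) • piKronecker M := by
  ext i j
  simp only [piKronecker, Matrix.smul_apply, of_apply, smul_eq_mul, Finset.prod_mul_distrib]

variable [DecidableEq ι] [CommSemiring R] [∀ k, Fintype (m k)]

lemma piKronecker_mul_piKronecker (M : ∀ k, Matrix (l k) (m k) R)
    (N : ∀ k, Matrix (m k) (p k) R) :
    piKronecker M * piKronecker N = piKronecker fun k => M k * N k := by
  ext i j
  simp only [piKronecker, mul_apply, of_apply, ← Finset.prod_mul_distrib, Fintype.prod_sum]

lemma trace_piKronecker (M : ∀ k, Matrix (m k) (m k) R) :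
    (piKronecker M).trace = ∏ k, (M k).trace := by
  simp only [piKronecker, trace, diag_apply, of_apply, Fintype.prod_sum]

end PiKronecker

lemma trace_vecMulVec_star_mul_vecMulVec_star {m R : Type*} [Fintype m] [CommSemiring R]
    [StarRing R] (v w : m → R) :
    (vecMulVec v (star v) * vecMulVec w (star w)).trace =
      (star v ⬝ᵥ w) * star (star v ⬝ᵥ w) := by
  rw [vecMulVec_mul_vecMulVec, trace_vecMulVec, dotProduct_smul, smul_eq_mul, star_dotProduct,
    star_star, dotProduct_comm v]

lemma ofReal_re_star_dotProduct_mulVec {m : Type*} [Fintype m] {M : Matrix m m ℂ}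
    (hM : M.IsHermitian) (v : m → ℂ) :
    ((star v ⬝ᵥ M *ᵥ v).re : ℂ) = star v ⬝ᵥ M *ᵥ v :=
  Complex.conj_eq_iff_re.mp <| Complex.conj_eq_iff_im.mpr (hM.im_star_dotProduct_mulVec_self v)

section Pauli

/-- The phase `c` in the single-qubit Pauli multiplication rule `Q a * Q b = c • Q (a ^^^ b)`. -/
noncomputable def pauliPhase : Fin 4 → Fin 4 → ℂ :=
  ![![1, 1, 1, 1], ![1, 1, I, -I], ![1, -I, 1, I], ![1, I, -I, 1]]

lemma normSq_pauliPhase (a b : Fin 4) : normSq (pauliPhase a b) = 1 := by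
  fin_cases a <;> fin_cases b <;> simp [pauliPhase]

lemma Q_mul_Q (a b : Fin 4) : Q a * Q b = pauliPhase a b • Q (a ^^^ b) := by
  fin_cases a <;> fin_cases b <;> ext i j <;> fin_cases i <;> fin_cases j <;>
    simp [Q, pauliPhase, mul_apply]

lemma isHermitian_Q (a : Fin 4) : (Q a).IsHermitian := by
  fin_cases a <;> ext i j <;> fin_cases i <;> fin_cases j <;> simp [Q]

variable {n : ℕ}

lemma P_eq_piKronecker (s : Fin n → Fin 4) : P s = piKronecker fun k => Q (s k) := rfl

lemma isHermitian_P (s : Fin n → Fin 4) : (P s).IsHermitian := by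
  simp only [IsHermitian, P_eq_piKronecker, conjTranspose_piKronecker, (isHermitian_Q _).eq]

lemma P_mul_P (s t : Fin n → Fin 4) :
    P s * P t = (∏ k, pauliPhase (s k) (t k)) • P fun k => s k ^^^ t k := by
  simp only [P_eq_piKronecker, piKronecker_mul_piKronecker, Q_mul_Q, piKronecker_smul]

lemma normSq_dotProduct_P_mulVec (s t : Fin n → Fin 4) (ψ : (Fin n → Fin 2) → ℂ) :
    normSq (star (P s *ᵥ ψ) ⬝ᵥ P t *ᵥ ψ) =
      (star ψ ⬝ᵥ (P fun k => s k ^^^ t k) *ᵥ ψ).re ^ 2 := by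
  have overlap : star (P s *ᵥ ψ) ⬝ᵥ P t *ᵥ ψ = (∏ k, pauliPhase (s k) (t k)) *
      (star ψ ⬝ᵥ (P fun k => s k ^^^ t k) *ᵥ ψ) := by
    rw [star_mulVec, (isHermitian_P s).eq, ← dotProduct_mulVec, mulVec_mulVec, P_mul_P,
      smul_mulVec, dotProduct_smul, smul_eq_mul]
  rw [overlap, ← ofReal_re_star_dotProduct_mulVec (isHermitian_P _), normSq_mul, map_prod,
    Finset.prod_eq_one fun k _ => normSq_pauliPhase _ _, one_mul, normSq_ofReal, ofReal_re, sq]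

instance : LawfulXor (Fin 4) := inferInstanceAs (LawfulXor (Fin (2 ^ 2)))

lemma sum_comp_xor {M : Type*} [AddCommMonoid M] (s : Fin n → Fin 4)
    (F : (Fin n → Fin 4) → M) : ∑ t : Fin n → Fin 4, F (fun k => s k ^^^ t k) = ∑ t, F t :=
  (Equiv.piCongrRight fun k => Equiv.xor (s k)).sum_comp F

end Pauli

section Purity

variable (n α : ℕ) (ψ : (Fin n → Fin 2) → ℂ)

lemma rho_eq_sum_piKronecker :
    rho n α ψ = ((2 ^ n : ℂ) ^ 2)⁻¹ • ∑ s : Fin n → Fin 4,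
      piKronecker fun _ : Fin α => vecMulVec (P s *ᵥ ψ) (star (P s *ᵥ ψ)) := by
  ext f g
  simp [rho, piKronecker, Matrix.sum_apply, vecMulVec_apply]

lemma trace_rho_mul_rho :
    (rho n α ψ * rho n α ψ).trace = (((2 ^ n : ℂ) ^ 2)⁻¹ * ((2 ^ n : ℂ) ^ 2)⁻¹) *
      ∑ s : Fin n → Fin 4, ∑ t : Fin n → Fin 4,
        (normSq (star (P s *ᵥ ψ) ⬝ᵥ P t *ᵥ ψ) : ℂ) ^ α := by
  simp only [rho_eq_sum_piKronecker, smul_mul_smul_comm, Finset.sum_mul_sum, trace_smul,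
    trace_sum, piKronecker_mul_piKronecker, trace_piKronecker,
    trace_vecMulVec_star_mul_vecMulVec_star, Complex.star_def, mul_conj, Finset.prod_const,
    Finset.card_univ, Fintype.card_fin, smul_eq_mul]

lemma sum_sum_normSq_dotProduct_P_mulVec_pow :
    ∑ s : Fin n → Fin 4, ∑ t : Fin n → Fin 4, normSq (star (P s *ᵥ ψ) ⬝ᵥ P t *ᵥ ψ) ^ α =
      (2 ^ n) ^ 3 * A n α ψ := by
  have row_sum (s : Fin n → Fin 4) :
      ∑ t : Fin n → Fin 4, normSq (star (P s *ᵥ ψ) ⬝ᵥ P t *ᵥ ψ) ^ α = 2 ^ n * A n α ψ := by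
    simp only [normSq_dotProduct_P_mulVec, ← pow_mul, A]
    rw [sum_comp_xor s fun u => (star ψ ⬝ᵥ P u *ᵥ ψ).re ^ (2 * α), mul_inv_cancel_left₀ (by simp)]
  have card_strings : (Fintype.card (Fin n → Fin 4) : ℝ) = (2 ^ n) ^ 2 := by
    rw [Fintype.card_fun, Fintype.card_fin, Fintype.card_fin, ← pow_mul, mul_comm, pow_mul]
    norm_num
  rw [Finset.sum_congr rfl fun s _ => row_sum s, Finset.sum_const, Finset.card_univ, nsmul_eq_mul,
    card_strings]
  ring

theorem purity_encodes_A_general :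
    (rho n α ψ * rho n α ψ).trace = (((2 ^ n : ℝ)⁻¹ * A n α ψ : ℝ) : ℂ) := by
  have overlaps := congrArg ((↑) : ℝ → ℂ) (sum_sum_normSq_dotProduct_P_mulVec_pow n α ψ)
  push_cast at overlaps ⊢
  rw [trace_rho_mul_rho, overlaps]
  field_simp

end Purity

theorem purity_encodes_A (n α : ℕ) (hα : 1 ≤ α) (ψ : (Fin n → Fin 2) → ℂ)
    (hψ : star ψ ⬝ᵥ ψ = 1) :
    ((rho n α ψ * rho n α ψ).trace).re = (2 ^ n : ℝ)⁻¹ * A n α ψ := by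
  rw [purity_encodes_A_general, ofReal_re]
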